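/- For every prime power q, one has h(1) < h(2)^{1/2}. -/

import Mathlib

/-!
Write `x = |P|⁻¹ ∈ (0, 1/2]` and `S = ∑_P x²`. Counting all monic polynomials of each degree
`n ≥ 1`, irreducible or not, gives `S ≤ ∑_{n ≥ 1} q^n q^{-2n} = 1 / (q - 1) ≤ 1`. Termwise,
`u_P - v_P = -log (1 - x²) ≤ (4/3) x²`, while `u_P + v_P = log ((1 + x) / (1 - x)) ≥ 2 x` gives
`u_P² + v_P² ≥ (u_P + v_P)² / 2 ≥ 2 x²`. Hence `h(1)² ≤ (16/9) S² ≤ (16/9) S ≤ (8/9) h(2)`.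
-/

open Polynomial

/-- `u_P = -log(1 - |P|⁻¹)` where `|P| = q^(deg P)`. -/
noncomputable def uP {Fq : Type} [Field Fq] [Fintype Fq] (P : Polynomial Fq) : ℝ :=
  -Real.log (1 - ((Fintype.card Fq : ℝ) ^ P.natDegree)⁻¹)

/-- `v_P = log(1 + |P|⁻¹)` where `|P| = q^(deg P)`. -/
noncomputable def vP {Fq : Type} [Field Fq] [Fintype Fq] (P : Polynomial Fq) : ℝ :=
  Real.log (1 + ((Fintype.card Fq : ℝ) ^ P.natDegree)⁻¹)

/-- `h(λ) = ∑_P (u_P^λ + (-1)^λ v_P^λ)`, the sum over all monic irreducible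
polynomials `P ∈ Fq[X]`. -/
noncomputable def hfun (Fq : Type) [Field Fq] [Fintype Fq] (l : ℕ) : ℝ :=
  ∑' P : {P : Polynomial Fq // P.Monic ∧ Irreducible P},
    (uP P.1 ^ l + (-1 : ℝ) ^ l * vP P.1 ^ l)

section Log

lemma neg_log_one_sub_le_div {x c : ℝ} (hx : 0 ≤ x) (hxc : x ≤ c) (hc : c < 1) :
    -Real.log (1 - x) ≤ x / (1 - c) := by
  have hx' : 0 < 1 - x := by linarith
  calc -Real.log (1 - x) ≤ (1 - x)⁻¹ - 1 := by
        linarith [Real.one_sub_inv_le_log_of_pos hx']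
    _ = x / (1 - x) := by
        field_simp
        ring
    _ ≤ x / (1 - c) := by
        gcongr

lemma log_one_sub_add_log_one_add {x : ℝ} (hx : |x| < 1) :
    Real.log (1 - x) + Real.log (1 + x) = Real.log (1 - x ^ 2) := by
  obtain ⟨h₁, h₂⟩ := abs_lt.1 hx
  rw [← Real.log_mul (by linarith) (by linarith)]
  ring_nf

lemma two_mul_le_log_one_add_sub_log_one_sub {x : ℝ} (hx₀ : 0 ≤ x) (hx : x < 1) :
    2 * x ≤ Real.log (1 + x) - Real.log (1 - x) := by
  have hseries := Real.hasSum_log_sub_log_of_abs_lt_one (abs_lt.2 ⟨by linarith, hx⟩)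
  simpa using le_hasSum hseries 0 fun k _ ↦ by positivity

end Log

section MonicCount

variable {R : Type*} [Ring R]

lemma card_monic_natDegree_eq [Nontrivial R] (n : ℕ) :
    Nat.card {f : R[X] // f.Monic ∧ f.natDegree = n} = Nat.card R ^ n := by
  rw [Nat.card_congr ((monicEquivDegreeLT n).trans (degreeLTEquiv R n).toEquiv), Nat.card_fun,
    Nat.card_fin]

lemma finite_monic_natDegree_eq [Finite R] (n : ℕ) :
    Finite {f : R[X] // f.Monic ∧ f.natDegree = n} := by
  cases subsingleton_or_nontrivial R
  · infer_instance
  · exact Finite.of_equiv _ ((monicEquivDegreeLT n).trans (degreeLTEquiv R n).toEquiv).symm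

lemma hasSum_pow_natDegree_monic [Finite R] [Nontrivial R] {t : ℝ} (ht₀ : 0 ≤ t)
    (ht : Nat.card R * t < 1) :
    HasSum (fun f : {f : R[X] // f.Monic} ↦ t ^ f.1.natDegree) (1 - Nat.card R * t)⁻¹ := by
  let e := Equiv.sigmaFiberEquiv fun f : {f : R[X] // f.Monic} ↦ f.1.natDegree
  let fiberEquiv (n : ℕ) :=
    Equiv.subtypeSubtypeEquivSubtypeInter (fun f : R[X] ↦ f.Monic) (·.natDegree = n)
  have hfin (n : ℕ) : Finite {f : {f : R[X] // f.Monic} // f.1.natDegree = n} :=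
    have := finite_monic_natDegree_eq (R := R) n
    .of_equiv _ (fiberEquiv n).symm
  have hfiber (n : ℕ) :
      ∑' f : {f : {f : R[X] // f.Monic} // f.1.natDegree = n}, t ^ (e ⟨n, f⟩).1.natDegree =
        (Nat.card R * t) ^ n := by
    calc _ = ∑' _ : {f : {f : R[X] // f.Monic} // f.1.natDegree = n}, t ^ n :=
          tsum_congr fun f ↦ congrArg (t ^ ·) f.2
      _ = (Nat.card R * t) ^ n := by
          rw [tsum_const, Nat.card_congr (fiberEquiv n), card_monic_natDegree_eq, nsmul_eq_mul,
            Nat.cast_pow, mul_pow]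
  have hgeom := hasSum_geometric_of_lt_one (by positivity) ht
  rw [← e.hasSum_iff]
  have hsum : Summable ((fun f : {f : R[X] // f.Monic} ↦ t ^ f.1.natDegree) ∘ e) := by
    refine (summable_sigma_of_nonneg fun _ ↦ pow_nonneg ht₀ _).2 ⟨fun n ↦ .of_finite, ?_⟩
    exact hgeom.summable.congr fun n ↦ (hfiber n).symm
  refine hgeom.sigma_of_hasSum (fun n ↦ ?_) hsum
  exact hfiber n ▸ Summable.of_finite.hasSum

end MonicCount

/-- The monic irreducible polynomials over `R`, the index set of the series `hfun`. -/
abbrev MonicIrreducible (R : Type*) [Semiring R] : Type _ :=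
  {P : R[X] // P.Monic ∧ Irreducible P}

namespace MonicIrreducible

variable {R : Type*} [Semiring R]

/-- The inclusion along which a series over monic irreducibles is compared with the one over all
monic polynomials. -/
def toMonic (P : MonicIrreducible R) : {f : R[X] // f.Monic} :=
  ⟨P.1, P.2.1⟩

lemma toMonic_injective : Function.Injective (toMonic (R := R)) :=
  fun _ _ h ↦ Subtype.ext (congrArg (fun f : {f : R[X] // f.Monic} ↦ f.1) h)

lemma toMonic_ne_one (P : MonicIrreducible R) : P.toMonic ≠ ⟨1, monic_one⟩ :=
  fun h ↦ P.2.2.ne_one (congrArg Subtype.val h)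

end MonicIrreducible

section DegreeSeries

variable {R : Type*} [Ring R] [Finite R] [Nontrivial R] {t : ℝ}

lemma summable_pow_natDegree_monicIrreducible (ht₀ : 0 ≤ t) (ht : Nat.card R * t < 1) :
    Summable fun P : MonicIrreducible R ↦ t ^ P.1.natDegree :=
  (hasSum_pow_natDegree_monic ht₀ ht).summable.comp_injective
    (i := MonicIrreducible.toMonic) MonicIrreducible.toMonic_injective

lemma tsum_pow_natDegree_monicIrreducible_le (ht₀ : 0 ≤ t) (ht : Nat.card R * t < 1) :
    ∑' P : MonicIrreducible R, t ^ P.1.natDegree ≤ (1 - Nat.card R * t)⁻¹ - 1 := by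
  classical
  -- Zeroing the term of the constant polynomial `1` removes the contribution of degree `0`.
  have hpos := (hasSum_pow_natDegree_monic (R := R) ht₀ ht).update ⟨1, monic_one⟩ 0
  have hle := hasSum_le_inj MonicIrreducible.toMonic MonicIrreducible.toMonic_injective
    (fun f _ ↦ ?_) (fun P ↦ ?_) (summable_pow_natDegree_monicIrreducible ht₀ ht).hasSum hpos
  · simpa only [natDegree_one, pow_zero, zero_sub, neg_add_eq_sub] using hle
  · obtain rfl | hf := eq_or_ne f ⟨1, monic_one⟩
    · rw [Function.update_self]
    · rw [Function.update_of_ne hf]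
      positivity
  · rw [Function.update_of_ne P.toMonic_ne_one]
    rfl

end DegreeSeries

/-- The inverse absolute value `|P|⁻¹ = q ^ (-deg P)`, where `q = Nat.card R`. -/
noncomputable def invAbs {R : Type*} [Semiring R] (P : R[X]) : ℝ :=
  ((Nat.card R : ℝ) ^ P.natDegree)⁻¹

section InvAbs

lemma invAbs_pow {R : Type*} [Semiring R] (P : R[X]) (k : ℕ) :
    invAbs P ^ k = ((Nat.card R : ℝ)⁻¹ ^ k) ^ P.natDegree := by
  rw [invAbs, ← inv_pow, pow_right_comm]

lemma invAbs_pos {R : Type*} [Semiring R] [Finite R] (P : R[X]) : 0 < invAbs P :=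
  inv_pos.2 (pow_pos (Nat.cast_pos.2 Nat.card_pos) _)

lemma two_le_natCard (α : Type*) [Finite α] [Nontrivial α] : (2 : ℝ) ≤ Nat.card α := by
  exact_mod_cast Finite.one_lt_card (α := α)

lemma invAbs_le_half {F : Type*} [Field F] [Finite F] {P : F[X]} (hP : Irreducible P) :
    invAbs P ≤ 1 / 2 := by
  have hq := two_le_natCard F
  rw [invAbs, one_div]
  exact inv_anti₀ two_pos (hq.trans (le_self_pow₀ (by linarith) hP.natDegree_pos.ne'))

lemma natCard_mul_inv_pow_succ (α : Type*) [Finite α] [Nonempty α] (k : ℕ) :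
    Nat.card α * (Nat.card α : ℝ)⁻¹ ^ (k + 1) = ((Nat.card α : ℝ) ^ k)⁻¹ := by
  rw [pow_succ', mul_inv_cancel_left₀ (Nat.cast_ne_zero.2 Nat.card_pos.ne'), inv_pow]

lemma natCard_mul_inv_pow_succ_lt_one (α : Type*) [Finite α] [Nontrivial α] {k : ℕ}
    (hk : k ≠ 0) : Nat.card α * (Nat.card α : ℝ)⁻¹ ^ (k + 1) < 1 := by
  rw [natCard_mul_inv_pow_succ]
  exact inv_lt_one_of_one_lt₀ (one_lt_pow₀ (by linarith [two_le_natCard α]) hk)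

end InvAbs

section InvAbsSeries

variable (R : Type*) [Ring R] [Finite R] [Nontrivial R]

lemma summable_invAbs_pow_succ {k : ℕ} (hk : k ≠ 0) :
    Summable fun P : MonicIrreducible R ↦ invAbs P.1 ^ (k + 1) := by
  simp only [invAbs_pow]
  exact summable_pow_natDegree_monicIrreducible (by positivity)
    (natCard_mul_inv_pow_succ_lt_one R hk)

lemma tsum_invAbs_pow_succ_le {k : ℕ} (hk : k ≠ 0) :
    ∑' P : MonicIrreducible R, invAbs P.1 ^ (k + 1) ≤ ((Nat.card R : ℝ) ^ k - 1)⁻¹ := by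
  have hq : 1 < (Nat.card R : ℝ) ^ k := one_lt_pow₀ (by linarith [two_le_natCard R]) hk
  calc ∑' P : MonicIrreducible R, invAbs P.1 ^ (k + 1)
      ≤ (1 - Nat.card R * (Nat.card R : ℝ)⁻¹ ^ (k + 1))⁻¹ - 1 := by
        simp only [invAbs_pow]
        exact tsum_pow_natDegree_monicIrreducible_le (by positivity)
          (natCard_mul_inv_pow_succ_lt_one R hk)
    _ = ((Nat.card R : ℝ) ^ k - 1)⁻¹ := by
        have : (Nat.card R : ℝ) ^ k - 1 ≠ 0 := by linarith
        rw [natCard_mul_inv_pow_succ]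
        field_simp
        ring

lemma summable_invAbs_sq : Summable fun P : MonicIrreducible R ↦ invAbs P.1 ^ 2 :=
  summable_invAbs_pow_succ R one_ne_zero

lemma tsum_invAbs_sq_le_one : ∑' P : MonicIrreducible R, invAbs P.1 ^ 2 ≤ 1 := by
  refine (tsum_invAbs_pow_succ_le R one_ne_zero).trans (inv_le_one_of_one_le₀ ?_)
  linarith [two_le_natCard R]

lemma tsum_invAbs_sq_pos (F : Type*) [Field F] [Finite F] :
    0 < ∑' P : MonicIrreducible F, invAbs P.1 ^ 2 :=
  (summable_invAbs_sq F).tsum_pos (fun _ ↦ sq_nonneg _) ⟨X, monic_X, irreducible_X⟩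
    (pow_pos (invAbs_pos _) 2)

end InvAbsSeries

section LogTerms

variable {Fq : Type} [Field Fq] [Fintype Fq] {P : Fq[X]}

lemma uP_eq_neg_log (P : Fq[X]) : uP P = -Real.log (1 - invAbs P) := by
  rw [uP, invAbs, Nat.card_eq_fintype_card]

lemma vP_eq_log (P : Fq[X]) : vP P = Real.log (1 + invAbs P) := by
  rw [vP, invAbs, Nat.card_eq_fintype_card]

lemma uP_sub_vP (hP : Irreducible P) : uP P - vP P = -Real.log (1 - invAbs P ^ 2) := by
  have hx : |invAbs P| < 1 := by
    rw [abs_of_pos (invAbs_pos P)]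
    linarith [invAbs_le_half hP]
  rw [uP_eq_neg_log, vP_eq_log, ← log_one_sub_add_log_one_add hx]
  ring

lemma uP_sub_vP_nonneg (hP : Irreducible P) : 0 ≤ uP P - vP P := by
  have hx₀ := invAbs_pos P
  have hx := invAbs_le_half hP
  rw [uP_sub_vP hP, neg_nonneg]
  exact Real.log_nonpos (by nlinarith) (by nlinarith)

lemma uP_sub_vP_le (hP : Irreducible P) : uP P - vP P ≤ 4 / 3 * invAbs P ^ 2 := by
  have hx : invAbs P ^ 2 ≤ 1 / 4 :=
    (pow_le_pow_left₀ (invAbs_pos P).le (invAbs_le_half hP) 2).trans_eq (by norm_num)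
  rw [uP_sub_vP hP]
  exact (neg_log_one_sub_le_div (sq_nonneg _) hx (by norm_num)).trans_eq (by ring)

lemma two_mul_invAbs_sq_le (hP : Irreducible P) : 2 * invAbs P ^ 2 ≤ uP P ^ 2 + vP P ^ 2 := by
  have hx₀ := invAbs_pos P
  have hadd : 2 * invAbs P ≤ uP P + vP P := by
    rw [uP_eq_neg_log, vP_eq_log, neg_add_eq_sub]
    exact two_mul_le_log_one_add_sub_log_one_sub hx₀.le (by linarith [invAbs_le_half hP])
  have hsq : (2 * invAbs P) ^ 2 ≤ (uP P + vP P) ^ 2 := by gcongr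
  linarith [add_sq_le (a := uP P) (b := vP P)]

lemma uP_sq_add_vP_sq_le (hP : Irreducible P) : uP P ^ 2 + vP P ^ 2 ≤ 5 * invAbs P ^ 2 := by
  have hx₀ := invAbs_pos P
  have hx := invAbs_le_half hP
  have hv₀ : 0 ≤ vP P := vP_eq_log P ▸ Real.log_nonneg (by linarith)
  have hu₀ : 0 ≤ uP P := by linarith [uP_sub_vP_nonneg hP]
  have hv : vP P ≤ invAbs P := by
    rw [vP_eq_log]
    linarith [Real.log_le_sub_one_of_pos (x := 1 + invAbs P) (by linarith)]
  have hu : uP P ≤ 2 * invAbs P := by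
    rw [uP_eq_neg_log]
    exact (neg_log_one_sub_le_div hx₀.le hx (by norm_num)).trans_eq (by ring)
  calc uP P ^ 2 + vP P ^ 2 ≤ (2 * invAbs P) ^ 2 + invAbs P ^ 2 := by gcongr
    _ = 5 * invAbs P ^ 2 := by ring

end LogTerms

section HFun

variable (Fq : Type) [Field Fq] [Fintype Fq]

lemma hfun_one_eq_tsum : hfun Fq 1 = ∑' P : MonicIrreducible Fq, (uP P.1 - vP P.1) :=
  tsum_congr fun P ↦ by ring

lemma hfun_two_eq_tsum : hfun Fq 2 = ∑' P : MonicIrreducible Fq, (uP P.1 ^ 2 + vP P.1 ^ 2) :=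
  tsum_congr fun P ↦ by ring

lemma hfun_one_nonneg : 0 ≤ hfun Fq 1 := by
  rw [hfun_one_eq_tsum]
  exact tsum_nonneg fun P ↦ uP_sub_vP_nonneg P.2.2

lemma hfun_one_le : hfun Fq 1 ≤ 4 / 3 * ∑' P : MonicIrreducible Fq, invAbs P.1 ^ 2 := by
  have hbound := (summable_invAbs_sq Fq).mul_left (4 / 3)
  have hsum : Summable fun P : MonicIrreducible Fq ↦ uP P.1 - vP P.1 :=
    .of_nonneg_of_le (fun P ↦ uP_sub_vP_nonneg P.2.2) (fun P ↦ uP_sub_vP_le P.2.2) hbound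
  rw [hfun_one_eq_tsum, ← tsum_mul_left]
  exact hsum.tsum_le_tsum (fun P ↦ uP_sub_vP_le P.2.2) hbound

lemma two_mul_tsum_invAbs_sq_le_hfun_two :
    2 * ∑' P : MonicIrreducible Fq, invAbs P.1 ^ 2 ≤ hfun Fq 2 := by
  have hsum : Summable fun P : MonicIrreducible Fq ↦ uP P.1 ^ 2 + vP P.1 ^ 2 :=
    .of_nonneg_of_le (fun P ↦ by positivity) (fun P ↦ uP_sq_add_vP_sq_le P.2.2)
      ((summable_invAbs_sq Fq).mul_left 5)
  rw [hfun_two_eq_tsum, ← tsum_mul_left]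
  exact ((summable_invAbs_sq Fq).mul_left 2).tsum_le_tsum
    (fun P ↦ two_mul_invAbs_sq_le P.2.2) hsum

lemma hfun_two_pos : 0 < hfun Fq 2 := by
  linarith [tsum_invAbs_sq_pos Fq, two_mul_tsum_invAbs_sq_le_hfun_two Fq]

lemma hfun_one_sq_le : hfun Fq 1 ^ 2 ≤ 8 / 9 * hfun Fq 2 := by
  have hS₀ := tsum_invAbs_sq_pos Fq
  have hS₁ := tsum_invAbs_sq_le_one Fq
  have h₂ := two_mul_tsum_invAbs_sq_le_hfun_two Fq
  have h₁ := pow_le_pow_left₀ (hfun_one_nonneg Fq) (hfun_one_le Fq) 2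
  set S := ∑' P : MonicIrreducible Fq, invAbs P.1 ^ 2
  calc hfun Fq 1 ^ 2 ≤ (4 / 3 * S) ^ 2 := h₁
    _ = 16 / 9 * (S * S) := by ring
    _ ≤ 16 / 9 * S := by gcongr; exact mul_le_of_le_one_left hS₀.le hS₁
    _ ≤ 8 / 9 * hfun Fq 2 := by linarith

end HFun

/-- For every prime power `q` (realized as the cardinality of a finite field `Fq`),
one has `h(1) < h(2)^(1/2)` (real power). -/
theorem hfun_one_lt (Fq : Type) [Field Fq] [Fintype Fq] :
    hfun Fq 1 < hfun Fq 2 ^ ((1 : ℝ) / 2) := by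
  rw [← Real.sqrt_eq_rpow]
  refine Real.lt_sqrt_of_sq_lt ?_
  linarith [hfun_one_sq_le Fq, hfun_two_pos Fq]
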